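/- Let K be a simplicial complex whose vertex set is partitioned into parts V_0,…,V_m, with H̃_{m-1}(K, F) = 0 for a field F, and let k be an integer with -1 ≤ k ≤ m-1. For S ⊆ {0,…,m}, let K_S be the subcomplex induced by ⋃_{i∈S} V_i, and let K̃_S be the subcomplex of all simplices of K whose set of colours does not contain S. Suppose for every S ⊆ {0,…,m}: (1s) H̃_{k-|S|}(K_{{0,…,m}∖S}, F) = 0 whenever 1 ≤ |S| ≤ k+1, and (2s) H̃_{|S|-2}(K̃_S, F) = 0 whenever k+2 ≤ |S| ≤ m. Then K contains a rainbow simplex. -/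

import Mathlib

open Finset

/-- The faces of an abstract simplicial complex: a set of nonempty finite sets of
vertices, closed under taking nonempty subsets. -/
def IsComplex {V : Type*} (S : Set (Finset V)) : Prop :=
  (∀ s ∈ S, s.Nonempty) ∧ ∀ s ∈ S, ∀ t ⊆ s, t.Nonempty → t ∈ S

/-- The nerve of a collection `Γ` of (sub)complexes, as a set of finsets of the index
type: the simplices are the nonempty subcollections with a common face. -/
def nerveC {ι V : Type*} (Γ : ι → Set (Finset V)) : Set (Finset ι) :=
  {σ | σ.Nonempty ∧ (⋂ i ∈ (σ : Finset ι), Γ i).Nonempty}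

/-- Simplicial `n`-chains (dimension `n`, i.e. on vertex sets of cardinality `n+1`)
on the vertex type `V`, with coefficients in `A`. -/
abbrev Chains (A V : Type*) [AddCommGroup A] [LinearOrder V] (n : ℕ) : Type _ :=
  {s : Finset V // s.card = n + 1} →₀ A

variable (R : Type*) [CommRing R] (A : Type*) [AddCommGroup A] [Module R A]
variable (V : Type*) [LinearOrder V]

/-- The simplicial boundary map, with the usual alternating signs determined by the
linear order on the vertices. -/
noncomputable def bdry (n : ℕ) : Chains A V (n + 1) →ₗ[R] Chains A V n :=
  Finsupp.lsum R fun s =>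
    ∑ v ∈ (s : Finset V).attach,
      ((-1 : ℤ) ^ (((s : Finset V).filter (fun w => w < v.1)).card)) •
        (Finsupp.lsingle (R := R) ⟨(s : Finset V).erase v.1, by
          rw [Finset.card_erase_of_mem v.2, s.2]; rfl⟩)

/-- The augmentation map on `0`-chains. -/
noncomputable def aug : Chains A V 0 →ₗ[R] A :=
  Finsupp.lsum R fun _ => LinearMap.id

/-- Reduced cycles: kernel of the boundary map, resp. of the augmentation in degree 0. -/
noncomputable def cycles : (n : ℕ) → Submodule R (Chains A V n)
  | 0 => LinearMap.ker (aug R A V)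
  | (n + 1) => LinearMap.ker (bdry R A V n)

/-- Chains supported on the simplices belonging to `S`. -/
def chainsIn (S : Set (Finset V)) (n : ℕ) : Submodule R (Chains A V n) :=
  Finsupp.supported A R {s : {s : Finset V // s.card = n + 1} | ↑s ∈ S}

/-- Reduced cycles of the complex `S`. -/
noncomputable def cyclesIn (S : Set (Finset V)) (n : ℕ) : Submodule R (Chains A V n) :=
  cycles R A V n ⊓ chainsIn R A V S n

/-- Boundaries of chains of the complex `S`. -/
noncomputable def boundariesIn (S : Set (Finset V)) (n : ℕ) : Submodule R (Chains A V n) :=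
  Submodule.map (bdry R A V n) (chainsIn R A V S (n + 1))

/-- Reduced simplicial homology of the complex `S` in degree `n ≥ 0`,
with coefficients in the `R`-module `A`. -/
noncomputable abbrev redH (S : Set (Finset V)) (n : ℕ) : Type _ :=
  (cyclesIn R A V S n) ⧸
    (Submodule.comap (cyclesIn R A V S n).subtype (boundariesIn R A V S n))

/-- Vanishing of the reduced homology of `S` in degree `n : ℤ`, with the convention
that `H̃₋₁(S) = 0` iff `S` is nonempty (and trivial vanishing below degree `-1`). -/
def RedHVanish (S : Set (Finset V)) (n : ℤ) : Prop :=
  if n < -1 then True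
  else if n = -1 then S.Nonempty
  else Subsingleton (redH R A V S n.toNat)

open scoped Classical in
/-- The dimension (rank) of the reduced homology of `S` in degree `n : ℤ`; in degree `-1`
it is `0` iff `S` is nonempty, in accordance with the convention. -/
noncomputable def redHRank (S : Set (Finset V)) (n : ℤ) : Cardinal :=
  if n < -1 then 0
  else if n = -1 then (if S.Nonempty then (0 : Cardinal) else 1)
  else Module.rank R (redH R A V S n.toNat)

/-!
Colour `i` gives the subcomplex `missing c i` of the simplices avoiding it: `K_{Sᶜ}` is the
intersection of these over `i ∈ S`, and `K̃_T` is their union over `i ∈ T`. In particular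
`X ≤ T.sup (missing c)` says that no simplex of `X` meets all colours of `T`.

One step removes a colour from `T`. Suppose that no simplex of `X` meets all colours of `T ∪ {i}`,
for any further colour `i`, and that a simplex `x` of `X` has exactly one vertex of each colour in
`T`. The boundary of `x` lies in `X ∩ K̃_T`, for dimension reasons, so if this complex is acyclic in
that degree then `∂x = ∂y` with `y` in `X ∩ K̃_T`, and if `X` is acyclic then `x - y = ∂w` with `w`
in `X`. Split `∂` by colours into anticommuting differentials `∂_t`: both `y` and `∂w` lie in the
sum of the kernels of the `∂_t`, `t ∈ T`. The simplex `x` does not, because applying all these `∂_t`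
in turn reduces it to `±∅`.

If `K` has no rainbow simplex, the hypotheses on `K̃_T` and this step show that no simplex has
`k + 2` colours. From then on one adds colours to `S` while removing them from `T`, with
`#S + #T = k + 1`, to see that no simplex of `K_{Sᶜ}` meets all colours of `T`; Mayer–Vietoris
supplies the acyclicity of `K_{Sᶜ} ∩ K̃_T`. For `T = ∅` this is absurd, as `∅` is a simplex.
-/

section SignedBoundary

variable {V}

/-- The sign with which the facet `s.erase v` enters the boundary of the simplex `s`. -/
def faceSign (s : Finset V) (v : V) : R :=
  (-1) ^ #{w ∈ s | w < v}

lemma faceSign_erase_of_le {s : Finset V} {v w : V} (hwv : w ≤ v) :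
    faceSign R (s.erase v) w = faceSign R s w := by
  have hv : v ∉ ({x ∈ s | x < w} : Finset V) := fun h => (mem_filter.1 h).2.not_ge hwv
  rw [faceSign, faceSign, filter_erase, erase_eq_of_notMem hv]

lemma faceSign_erase_of_lt {s : Finset V} {v w : V} (hv : v ∈ s) (hvw : v < w) :
    faceSign R (s.erase v) w = -faceSign R s w := by
  have hv' : v ∈ ({x ∈ s | x < w} : Finset V) := mem_filter.2 ⟨hv, hvw⟩
  rw [faceSign, faceSign, filter_erase, ← card_erase_add_one hv', pow_succ]
  simp

lemma faceSign_mul_faceSign_erase {s : Finset V} {v w : V} (hv : v ∈ s) (hw : w ∈ s)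
    (hvw : v ≠ w) :
    faceSign R s v * faceSign R (s.erase v) w =
      -(faceSign R s w * faceSign R (s.erase w) v) := by
  wlog hlt : v < w generalizing v w
  · rw [this hw hv hvw.symm (hvw.lt_or_gt.resolve_left hlt), neg_neg]
  rw [faceSign_erase_of_lt R hv hlt, faceSign_erase_of_le R hlt.le]
  ring

variable {R A}

/-- The weighted boundary on augmented chains (all finite sets, including `∅`, are simplices):
the facet of `s` opposite to `v` enters with the additional factor `u v`. -/
noncomputable def weightedBdry (u : V → R) : (Finset V →₀ A) →ₗ[R] (Finset V →₀ A) :=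
  Finsupp.lsum R fun s => ∑ v ∈ s, (faceSign R s v * u v) • Finsupp.lsingle (s.erase v)

lemma weightedBdry_single (u : V → R) (s : Finset V) (a : A) :
    weightedBdry u (Finsupp.single s a) =
      ∑ v ∈ s, (faceSign R s v * u v) • Finsupp.single (s.erase v) a := by
  simp [weightedBdry]

lemma weightedBdry_add (u u' : V → R) :
    weightedBdry (A := A) (u + u') = weightedBdry u + weightedBdry u' := by
  ext1 s
  ext1 a
  simp [weightedBdry_single, mul_add, add_smul, sum_add_distrib]

lemma weightedBdry_weightedBdry_self (u : V → R) (z : Finset V →₀ A) :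
    weightedBdry u (weightedBdry u z) = 0 := by
  induction z using Finsupp.induction_linear with
  | zero => simp
  | add x y hx hy => rw [map_add, map_add, hx, hy, add_zero]
  | single s a =>
    simp only [weightedBdry_single, map_sum, map_smul, smul_sum, smul_smul]
    rw [sum_sigma']
    refine sum_involution (fun p _ => ⟨p.2, p.1⟩) ?_ ?_ ?_ fun _ _ => rfl
    · rintro ⟨v, w⟩ hvw
      simp only [mem_sigma, mem_erase] at hvw
      have hsign := faceSign_mul_faceSign_erase R hvw.1 hvw.2.2 hvw.2.1.symm
      have hcancel : faceSign R s v * u v * (faceSign R (s.erase v) w * u w) +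
          faceSign R s w * u w * (faceSign R (s.erase w) v * u v) = 0 := by
        linear_combination (u v * u w) * hsign
      rw [erase_right_comm, ← add_smul, hcancel, zero_smul]
    · rintro ⟨v, w⟩ hvw - heq
      simp only [mem_sigma, mem_erase] at hvw
      exact hvw.2.1 (Sigma.mk.inj_iff.1 heq).1
    · rintro ⟨v, w⟩ hvw
      simp only [mem_sigma, mem_erase] at hvw ⊢
      exact ⟨hvw.2.2, hvw.2.1.symm, hvw.1⟩

lemma weightedBdry_anticomm (u u' : V → R) (z : Finset V →₀ A) :
    weightedBdry u (weightedBdry u' z) = -weightedBdry u' (weightedBdry u z) := by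
  have h := weightedBdry_weightedBdry_self (u + u') z
  simp only [weightedBdry_add, LinearMap.add_apply, map_add, weightedBdry_weightedBdry_self,
    zero_add, add_zero] at h
  exact eq_neg_of_add_eq_zero_right h

variable (R) in
/-- The boundary map of the augmented chain complex. -/
noncomputable def augBdry : (Finset V →₀ A) →ₗ[R] (Finset V →₀ A) :=
  weightedBdry 1

lemma augBdry_single (s : Finset V) (a : A) :
    augBdry R (Finsupp.single s a) =
      ∑ v ∈ s, faceSign R s v • Finsupp.single (s.erase v) a := by
  simp [augBdry, weightedBdry_single]

end SignedBoundary

section AugmentedChains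

variable {α : Type*}

/-- Augmented `d`-chains of the complex `X`, which contains `∅` as its face of dimension `-1`. -/
def augChainsIn (X : LowerSet (Finset α)) (d : ℤ) : Submodule R (Finset α →₀ A) :=
  Finsupp.supported A R {s | s ∈ X ∧ (#s : ℤ) = d + 1}

variable {R A} {X Y : LowerSet (Finset α)} {d : ℤ}

lemma single_mem_augChainsIn {s : Finset α} (hs : s ∈ X) (hcard : (#s : ℤ) = d + 1) (a : A) :
    Finsupp.single s a ∈ augChainsIn R A X d :=
  Finsupp.single_mem_supported R a ⟨hs, hcard⟩

lemma augChainsIn_le {P : Submodule R (Finset α →₀ A)}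
    (hP : ∀ s ∈ X, (#s : ℤ) = d + 1 → ∀ a : A, Finsupp.single s a ∈ P) :
    augChainsIn R A X d ≤ P := by
  intro z hz
  rw [← Finsupp.sum_single z]
  exact P.sum_mem fun s hs => hP s (hz hs).1 (hz hs).2 _

lemma augChainsIn_inf :
    augChainsIn R A (X ⊓ Y) d = augChainsIn R A X d ⊓ augChainsIn R A Y d := by
  rw [augChainsIn, augChainsIn, augChainsIn, ← Finsupp.supported_inter]
  exact congrArg _ (Set.ext fun _ => and_and_right)

lemma augChainsIn_sup :
    augChainsIn R A (X ⊔ Y) d = augChainsIn R A X d ⊔ augChainsIn R A Y d := by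
  rw [augChainsIn, augChainsIn, augChainsIn, ← Finsupp.supported_union]
  exact congrArg _ (Set.ext fun _ => or_and_right)

end AugmentedChains

section Acyclicity

variable {R A V} {X Y : LowerSet (Finset V)} {d : ℤ}

lemma augBdry_mem_augChainsIn {z : Finset V →₀ A} (hz : z ∈ augChainsIn R A X (d + 1)) :
    augBdry R z ∈ augChainsIn R A X d := by
  suffices h : augChainsIn R A X (d + 1) ≤ (augChainsIn R A X d).comap (augBdry R) from h hz
  refine augChainsIn_le fun s hs hcard a => ?_
  rw [Submodule.mem_comap, augBdry_single]
  refine Submodule.sum_mem _ fun v hv => Submodule.smul_mem _ _ ?_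
  refine single_mem_augChainsIn (X.lower (erase_subset v s) hs) ?_ a
  rw [cast_card_erase_of_mem hv]
  omega

variable (R A) in
/-- Vanishing of the reduced homology of the complex `X` in degree `d`, in terms of augmented
chains. -/
def AcyclicAt (X : LowerSet (Finset V)) (d : ℤ) : Prop :=
  ∀ z ∈ augChainsIn R A X d, augBdry R z = 0 → ∃ y ∈ augChainsIn R A X (d + 1), augBdry R y = z

lemma acyclicAt_of_forall_card_ne (hX : ∀ s ∈ X, (#s : ℤ) ≠ d + 1) : AcyclicAt R A X d := by
  intro z hz _
  have hbot : augChainsIn R A X d ≤ ⊥ :=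
    augChainsIn_le fun s hs hcard _ => (hX s hs hcard).elim
  exact ⟨0, zero_mem _, by rw [map_zero, (Submodule.mem_bot R).1 (hbot hz)]⟩

-- The Mayer–Vietoris argument: a cycle `x + y` has `∂x = -∂y` in the intersection.
lemma AcyclicAt.sup (hX : AcyclicAt R A X d) (hY : AcyclicAt R A Y d)
    (hXY : AcyclicAt R A (X ⊓ Y) (d - 1)) : AcyclicAt R A (X ⊔ Y) d := by
  intro z hz hz0
  rw [augChainsIn_sup] at hz ⊢
  obtain ⟨x, hx, y, hy, rfl⟩ := Submodule.mem_sup.1 hz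
  have hxy : augBdry R x = -augBdry R y := eq_neg_of_add_eq_zero_left (by rwa [← map_add])
  have hmem : augBdry R x ∈ augChainsIn R A (X ⊓ Y) (d - 1) := by
    rw [augChainsIn_inf]
    refine ⟨augBdry_mem_augChainsIn (by simpa using hx), ?_⟩
    rw [hxy]
    exact neg_mem (augBdry_mem_augChainsIn (by simpa using hy))
  obtain ⟨w, hw, hwx⟩ := hXY _ hmem (weightedBdry_weightedBdry_self 1 x)
  rw [sub_add_cancel, augChainsIn_inf] at hw
  obtain ⟨x', hx', hxx'⟩ := hX (x - w) (sub_mem hx hw.1) (by rw [map_sub, hwx, sub_self])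
  obtain ⟨y', hy', hyy'⟩ := hY (y + w) (add_mem hy hw.2) (by
    rw [map_add, hwx, hxy, add_neg_cancel])
  refine ⟨x' + y', Submodule.add_mem_sup hx' hy', ?_⟩
  rw [map_add, hxx', hyy']
  abel

lemma acyclicAt_inf_finset_sup {ι : Type*} (B : ι → LowerSet (Finset V)) (T : Finset ι)
    (h : ∀ S ⊆ T, S.Nonempty → AcyclicAt R A (Y ⊓ S.inf B) (d - #S)) :
    AcyclicAt R A (Y ⊓ T.sup B) (d - 1) := by
  classical
  induction T using Finset.induction_on generalizing Y d with
  | empty => exact acyclicAt_of_forall_card_ne fun s hs => by simp at hs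
  | insert j T hj ih =>
    have hintersection : Y ⊓ B j ⊓ (Y ⊓ T.sup B) = Y ⊓ B j ⊓ T.sup B := by
      rw [← inf_assoc, inf_right_comm Y, inf_idem]
    rw [sup_insert, inf_sup_left]
    refine AcyclicAt.sup ?_ (ih fun S hS => h S (hS.trans (subset_insert j T))) ?_
    · simpa using h {j} (by simp) (singleton_nonempty j)
    · rw [hintersection]
      refine ih fun S hS _ => ?_
      have hSj := h (insert j S) (insert_subset_insert j hS) (insert_nonempty j S)
      rw [inf_insert, card_insert_of_notMem fun hjS => hj (hS hjS)] at hSj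
      rw [inf_assoc]
      convert hSj using 1
      push_cast
      ring

end Acyclicity

section Comparison

variable {V}

/-- The inclusion of the `n`-chains, indexed by the sets of `n + 1` vertices, into the augmented
chains. -/
noncomputable def toAug (n : ℕ) : Chains A V n →ₗ[R] (Finset V →₀ A) :=
  Finsupp.lmapDomain A R Subtype.val

variable {R A}

lemma toAug_single (n : ℕ) (s : {s : Finset V // #s = n + 1}) (a : A) :
    toAug R A n (Finsupp.single s a) = Finsupp.single (s : Finset V) a :=
  Finsupp.mapDomain_single

lemma toAug_injective (n : ℕ) : Function.Injective (toAug R A (V := V) n) :=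
  Finsupp.mapDomain_injective Subtype.val_injective

lemma augBdry_toAug_succ (n : ℕ) (z : Chains A V (n + 1)) :
    augBdry R (toAug R A (n + 1) z) = toAug R A n (bdry R A V n z) := by
  induction z using Finsupp.induction_linear with
  | zero => simp only [map_zero]
  | add x y hx hy => simp only [map_add, hx, hy]
  | single s a =>
    rw [toAug_single, augBdry_single, bdry, Finsupp.lsum_single, LinearMap.sum_apply, map_sum,
      ← sum_attach]
    refine sum_congr rfl fun v _ => ?_
    rw [LinearMap.smul_apply, map_zsmul, Finsupp.lsingle_apply, toAug_single, faceSign,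
      ← Int.cast_smul_eq_zsmul R]
    norm_cast

lemma augBdry_toAug_zero (z : Chains A V 0) :
    augBdry R (toAug R A 0 z) = Finsupp.single ∅ (aug R A V z) := by
  induction z using Finsupp.induction_linear with
  | zero => simp only [map_zero, Finsupp.single_zero]
  | add x y hx hy => simp only [map_add, hx, hy, Finsupp.single_add]
  | single s a =>
    obtain ⟨s, hs⟩ := s
    obtain ⟨v, rfl⟩ := card_eq_one.1 hs
    rw [toAug_single, augBdry_single, aug, Finsupp.lsum_single, sum_singleton]
    simp [faceSign, filter_singleton]

lemma mem_cycles_iff_augBdry_toAug_eq_zero {n : ℕ} {z : Chains A V n} :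
    z ∈ cycles R A V n ↔ augBdry R (toAug R A n z) = 0 := by
  cases n with
  | zero => rw [augBdry_toAug_zero, Finsupp.single_eq_zero, cycles, LinearMap.mem_ker]
  | succ n =>
    rw [augBdry_toAug_succ, map_eq_zero_iff _ (toAug_injective n), cycles, LinearMap.mem_ker]

lemma map_toAug_chainsIn (X : LowerSet (Finset V)) (n : ℕ) :
    (chainsIn R A V {s | s ∈ X ∧ s.Nonempty} n).map (toAug R A n) = augChainsIn R A X n := by
  rw [chainsIn, toAug, Finsupp.lmapDomain_supported, augChainsIn]
  congr 1
  ext s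
  constructor
  · rintro ⟨⟨s, hcard⟩, hs, rfl⟩
    exact ⟨hs.1, by exact_mod_cast hcard⟩
  · rintro ⟨hs, hcard⟩
    have hcard' : #s = n + 1 := by exact_mod_cast hcard
    exact ⟨⟨s, hcard'⟩, ⟨hs, card_pos.1 (n.succ_pos.trans_eq hcard'.symm)⟩, rfl⟩

lemma acyclicAt_neg_one {X : LowerSet (Finset V)} {v : V} (hv : {v} ∈ X) :
    AcyclicAt R A X (-1) := by
  intro z hz _
  have hempty : z = Finsupp.single ∅ (z ∅) := by
    rw [← Finsupp.support_subset_singleton]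
    intro s hs
    simpa using (hz hs).2
  refine ⟨Finsupp.single {v} (z ∅), single_mem_augChainsIn hv (by simp) _, ?_⟩
  rw [hempty, augBdry_single, sum_singleton]
  simp [faceSign, filter_singleton]

lemma acyclicAt_of_redHVanish {X : LowerSet (Finset V)} {d : ℤ}
    (h : RedHVanish R A V {s | s ∈ X ∧ s.Nonempty} d) : AcyclicAt R A X d := by
  unfold RedHVanish at h
  split_ifs at h with hlt heq
  · exact acyclicAt_of_forall_card_ne fun s _ => by omega
  · obtain ⟨s, hs, v, hv⟩ := h
    exact heq ▸ acyclicAt_neg_one (X.lower (singleton_subset_iff.2 hv) hs)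
  · obtain ⟨n, rfl⟩ := Int.eq_ofNat_of_zero_le (show 0 ≤ d by omega)
    rw [Int.toNat_natCast] at h
    intro z hz hz0
    rw [← map_toAug_chainsIn] at hz
    obtain ⟨y, hy, rfl⟩ := hz
    let y' : cyclesIn R A V {s | s ∈ X ∧ s.Nonempty} n :=
      ⟨y, mem_cycles_iff_augBdry_toAug_eq_zero.2 hz0, hy⟩
    obtain ⟨w, hw, hwy⟩ := (Submodule.Quotient.mk_eq_zero _).1
      (Subsingleton.elim (Submodule.Quotient.mk y' : redH R A V _ n) 0)
    refine ⟨toAug R A (n + 1) w, ?_, ?_⟩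
    · have hmem := Submodule.mem_map_of_mem (f := toAug R A (n + 1)) hw
      rw [map_toAug_chainsIn] at hmem
      exact_mod_cast hmem
    · rw [augBdry_toAug_succ, hwy]
      rfl

end Comparison

section ColorBoundary

variable {V ι : Type*} [LinearOrder V] [DecidableEq ι]

/-- The part of the augmented boundary that deletes a vertex of colour `t`. -/
noncomputable def colorBdry (c : V → ι) (t : ι) : (Finset V →₀ A) →ₗ[R] (Finset V →₀ A) :=
  weightedBdry fun v => if c v = t then 1 else 0

/-- The chains that are sums, over the colours `t ∈ T`, of chains killed by `colorBdry c t`. A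
rainbow simplex with colour set `T` is not one of them. -/
noncomputable def colorKer (c : V → ι) (T : Finset ι) : Submodule R (Finset V →₀ A) :=
  ⨆ t ∈ T, LinearMap.ker (colorBdry R A c t)

variable {R A} {c : V → ι} {s : Finset V} {t : ι} {T : Finset ι}

lemma colorBdry_single_eq_zero (hs : ∀ v ∈ s, c v ≠ t) (a : A) :
    colorBdry R A c t (Finsupp.single s a) = 0 := by
  rw [colorBdry, weightedBdry_single]
  exact sum_eq_zero fun v hv => by rw [if_neg (hs v hv), mul_zero, zero_smul]

lemma colorBdry_single_insert {v : V} (hv : v ∉ s) (hs : ∀ w ∈ s, c w ≠ c v) (a : A) :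
    colorBdry R A c (c v) (Finsupp.single (insert v s) a) =
      Finsupp.single s (faceSign R (insert v s) v • a) := by
  rw [colorBdry, weightedBdry_single, sum_insert hv, if_pos rfl, mul_one, erase_insert hv,
    Finsupp.smul_single, add_eq_left]
  exact sum_eq_zero fun w hw => by rw [if_neg (hs w hw), mul_zero, zero_smul]

lemma sum_colorBdry_single (hs : ∀ v ∈ s, c v ∈ T) (a : A) :
    ∑ t ∈ T, colorBdry R A c t (Finsupp.single s a) = augBdry R (Finsupp.single s a) := by
  simp only [colorBdry, weightedBdry_single, augBdry_single]
  rw [sum_comm]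
  refine sum_congr rfl fun v hv => ?_
  rw [← sum_smul, ← mul_sum, sum_ite_eq, if_pos (hs v hv), mul_one]

lemma ker_colorBdry_le_colorKer (ht : t ∈ T) :
    LinearMap.ker (colorBdry R A c t) ≤ colorKer R A c T :=
  le_iSup₂_of_le t ht le_rfl

lemma map_colorBdry_colorKer_insert_le :
    (colorKer R A c (insert t T)).map (colorBdry R A c t) ≤ colorKer R A c T := by
  rw [Submodule.map_le_iff_le_comap, colorKer, iSup₂_le_iff]
  intro u hu z hz
  rw [LinearMap.mem_ker] at hz
  rw [Submodule.mem_comap]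
  obtain rfl | huT := mem_insert.1 hu
  · exact hz ▸ zero_mem _
  · refine ker_colorBdry_le_colorKer huT ?_
    have hanticomm : colorBdry R A c u (colorBdry R A c t z) =
        -colorBdry R A c t (colorBdry R A c u z) := weightedBdry_anticomm _ _ z
    rw [LinearMap.mem_ker, hanticomm, hz, map_zero, neg_zero]

lemma single_notMem_colorKer (hs : Set.InjOn c s) {a : A} (ha : a ≠ 0) :
    Finsupp.single s a ∉ colorKer R A c (s.image c) := by
  induction s using Finset.induction_on generalizing a with
  | empty => simpa [colorKer] using ha
  | insert v s hv ih =>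
    intro hmem
    have hcv : ∀ w ∈ s, c w ≠ c v := fun w hw hwv =>
      hv (hs (mem_insert_of_mem hw) (mem_insert_self v s) hwv ▸ hw)
    have hsign : faceSign R (insert v s) v • a ≠ 0 := by
      rcases neg_one_pow_eq_or R #{w ∈ insert v s | w < v} with h | h <;>
        simpa [faceSign, h] using ha
    rw [image_insert] at hmem
    have hbdry := map_colorBdry_colorKer_insert_le (Submodule.mem_map_of_mem hmem)
    rw [colorBdry_single_insert hv hcv] at hbdry
    exact ih (hs.mono (coe_subset.2 (subset_insert v s))) hsign hbdry

end ColorBoundary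

section Missing

variable {V ι : Type*}

/-- The complex of the simplices that avoid the colour `i`. -/
def missing (c : V → ι) (i : ι) : LowerSet (Finset V) where
  carrier := {s | ∀ v ∈ s, c v ≠ i}
  lower' _ _ hts hs v hv := hs v (hts hv)

variable {c : V → ι} {s : Finset V} {S T : Finset ι}

lemma mem_missing {i : ι} : s ∈ missing c i ↔ ∀ v ∈ s, c v ≠ i :=
  Iff.rfl

lemma mem_inf_missing : s ∈ S.inf (missing c) ↔ ∀ v ∈ s, c v ∉ S := by
  simp only [Finset.inf_eq_iInf, LowerSet.mem_iInf_iff, mem_missing]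
  grind

lemma mem_sup_missing [DecidableEq ι] : s ∈ T.sup (missing c) ↔ ¬T ⊆ s.image c := by
  simp only [Finset.sup_eq_iSup, LowerSet.mem_iSup_iff, mem_missing]
  grind

lemma exists_subset_injOn_image_eq_of_subset_image [DecidableEq ι] (h : T ⊆ s.image c) :
    ∃ x ⊆ s, Set.InjOn c x ∧ x.image c = T := by
  have hsurj : Set.SurjOn c s T := by simpa [Set.SurjOn] using coe_subset.2 h
  obtain ⟨x, hxs, hx⟩ := exists_subset_injOn_image_eq_of_surjOn _ _ hsurj
  exact ⟨x, coe_subset.1 hxs, hx⟩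

variable {R A} {X : LowerSet (Finset V)} {d : ℤ}

lemma augChainsIn_le_augChainsIn_inf_sup_missing (hd : d + 1 < #T) :
    augChainsIn R A X d ≤ augChainsIn R A (X ⊓ T.sup (missing c)) d := by
  classical
  refine augChainsIn_le fun s hs hcard a => ?_
  refine single_mem_augChainsIn (LowerSet.mem_inf_iff.2 ⟨hs, ?_⟩) hcard a
  refine mem_sup_missing.2 fun hTs => ?_
  have := (card_le_card hTs).trans card_image_le
  omega

variable [LinearOrder V] [DecidableEq ι]

lemma augChainsIn_sup_missing_le_colorKer :
    augChainsIn R A (T.sup (missing c)) d ≤ colorKer R A c T := by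
  refine augChainsIn_le fun s hs _ a => ?_
  simp only [Finset.sup_eq_iSup, LowerSet.mem_iSup_iff] at hs
  obtain ⟨t, ht, hst⟩ := hs
  exact ker_colorBdry_le_colorKer ht (colorBdry_single_eq_zero hst a)

lemma augBdry_mem_colorKer (hX : ∀ i ∉ T, X ≤ (insert i T).sup (missing c))
    {z : Finset V →₀ A} (hz : z ∈ augChainsIn R A X d) : augBdry R z ∈ colorKer R A c T := by
  suffices h : augChainsIn R A X d ≤ (colorKer R A c T).comap (augBdry R) from h hz
  refine augChainsIn_le fun s hs _ a => ?_
  rw [Submodule.mem_comap]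
  by_cases hTs : T ⊆ s.image c
  · have hsT : ∀ v ∈ s, c v ∈ T := fun v hv => by
      by_contra hvT
      exact mem_sup_missing.1 (hX _ hvT hs) (insert_subset (mem_image_of_mem c hv) hTs)
    rw [← sum_colorBdry_single hsT]
    exact Submodule.sum_mem _ fun t ht =>
      ker_colorBdry_le_colorKer ht (weightedBdry_weightedBdry_self _ _)
  · obtain ⟨t, ht, hts⟩ := not_subset.1 hTs
    refine ker_colorBdry_le_colorKer ht ?_
    have hanticomm : colorBdry R A c t (augBdry R (Finsupp.single s a)) =
        -augBdry R (colorBdry R A c t (Finsupp.single s a)) := weightedBdry_anticomm _ _ _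
    have hmissing : ∀ v ∈ s, c v ≠ t := fun v hv hvt => hts (mem_image.2 ⟨v, hv, hvt⟩)
    rw [LinearMap.mem_ker, hanticomm, colorBdry_single_eq_zero hmissing, map_zero, neg_zero]

variable (R A) in
lemma le_sup_missing_of_acyclicAt [Nontrivial A] (hd : d + 2 = #T) (hX : AcyclicAt R A X (d + 1))
    (hXT : AcyclicAt R A (X ⊓ T.sup (missing c)) d)
    (hT : ∀ i ∉ T, X ≤ (insert i T).sup (missing c)) : X ≤ T.sup (missing c) := by
  by_contra hle
  obtain ⟨s, hs, hsT⟩ := Set.not_subset.1 hle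
  obtain ⟨x, hxs, hinj, rfl⟩ :=
    exists_subset_injOn_image_eq_of_subset_image (not_not.1 (mt mem_sup_missing.2 hsT))
  obtain ⟨a, ha⟩ := exists_ne (0 : A)
  have hx : Finsupp.single x a ∈ augChainsIn R A X (d + 1) :=
    single_mem_augChainsIn (X.lower hxs hs) (by rw [← card_image_of_injOn hinj, ← hd]; ring) a
  have hbdry : augBdry R (Finsupp.single x a) ∈
      augChainsIn R A (X ⊓ (x.image c).sup (missing c)) d :=
    augChainsIn_le_augChainsIn_inf_sup_missing (by omega) (augBdry_mem_augChainsIn hx)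
  obtain ⟨y, hy, hyx⟩ := hXT _ hbdry (weightedBdry_weightedBdry_self 1 _)
  rw [augChainsIn_inf] at hy
  obtain ⟨w, hw, hwxy⟩ := hX (Finsupp.single x a - y) (sub_mem hx hy.1)
    (by rw [map_sub, hyx, sub_self])
  refine single_notMem_colorKer (R := R) hinj ha ?_
  rw [← sub_add_cancel (Finsupp.single x a) y, ← hwxy]
  exact add_mem (augBdry_mem_colorKer hT hw) (augChainsIn_sup_missing_le_colorKer hy.2)

end Missing

section Descent

variable {R A}
variable {V ι : Type*} [LinearOrder V] {c : V → ι} {X : LowerSet (Finset V)} {n : ℕ}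

lemma acyclicAt_inf_inf_missing_inf_sup_missing {S T : Finset ι}
    (hinf : ∀ S : Finset ι, AcyclicAt R A (X ⊓ S.inf (missing c)) (n - 1 - #S))
    (hST : Disjoint S T) (hcard : #S + #T = n) :
    AcyclicAt R A (X ⊓ S.inf (missing c) ⊓ T.sup (missing c)) (#T - 2) := by
  classical
  have h := acyclicAt_inf_finset_sup (R := R) (A := A) (Y := X ⊓ S.inf (missing c))
    (d := #T - 1) (missing c) T fun S' hS' _ => by
      have hunion := hinf (S ∪ S')
      rw [inf_union, card_union_of_disjoint (hST.mono_right hS'), ← inf_assoc] at hunion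
      convert hunion using 1
      push_cast [← hcard]
      ring
  convert h using 1
  ring

lemma inf_inf_missing_le_sup_missing [Nontrivial A]
    (hinf : ∀ S : Finset ι, AcyclicAt R A (X ⊓ S.inf (missing c)) (n - 1 - #S))
    (hsup : ∀ T : Finset ι, #T = n + 1 → X ≤ T.sup (missing c))
    {S T : Finset ι} (hST : Disjoint S T) (hcard : #S + #T = n) :
    X ⊓ S.inf (missing c) ≤ T.sup (missing c) := by
  classical
  induction S using Finset.strongInduction generalizing T with
  | H S ih =>
    refine le_sup_missing_of_acyclicAt R A (sub_add_cancel _ 2) ?_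
      (acyclicAt_inf_inf_missing_inf_sup_missing hinf hST hcard) fun i hiT => ?_
    · convert hinf S using 1
      push_cast [← hcard]
      ring
    have hinsert : #(insert i T) = #T + 1 := card_insert_of_notMem hiT
    by_cases hiS : i ∈ S
    · exact inf_le_right.trans ((inf_le hiS).trans (le_sup (mem_insert_self i T)))
    obtain rfl | ⟨j, hj⟩ := S.eq_empty_or_nonempty
    · exact inf_le_left.trans (hsup _ (by simpa [hinsert] using hcard))
    have hle : X ⊓ S.inf (missing c) ≤ X ⊓ (S.erase j).inf (missing c) :=
      inf_le_inf_left X (inf_mono (erase_subset j S))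
    refine hle.trans (ih _ (erase_ssubset hj) ?_ ?_)
    · exact (disjoint_insert_right.2 ⟨hiS, hST⟩).mono_left (erase_subset j S)
    · rw [hinsert, ← hcard, ← card_erase_add_one hj]
      ring

variable [Fintype ι] [Nontrivial A]

lemma le_sup_missing_of_le_card (hX : X ≤ univ.sup (missing c))
    (hsup : ∀ T : Finset ι, n ≤ #T → AcyclicAt R A (X ⊓ T.sup (missing c)) (#T - 2))
    (T : Finset ι) (hT : n ≤ #T) : X ≤ T.sup (missing c) := by
  classical
  induction T using WellFoundedGT.induction with
  | _ T ih =>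
    obtain rfl | hne := eq_or_ne T univ
    · exact hX
    obtain ⟨i, hi⟩ : ∃ i, i ∉ T := by simpa [eq_univ_iff_forall] using hne
    have hinsert : ∀ j ∉ T, X ≤ (insert j T).sup (missing c) := fun j hj =>
      ih _ (ssubset_insert hj) (hT.trans (card_le_card (subset_insert j T)))
    have hacyclic := hsup (insert i T) (hT.trans (card_le_card (subset_insert i T)))
    rw [inf_eq_left.2 (hinsert i hi), card_insert_of_notMem hi] at hacyclic
    refine le_sup_missing_of_acyclicAt R A (sub_add_cancel _ 2) ?_ (hsup T hT) hinsert
    convert hacyclic using 1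
    push_cast
    ring

lemma not_le_univ_sup_missing (h0 : ∅ ∈ X) (hn : n < Fintype.card ι)
    (hinf : ∀ S : Finset ι, S.Nonempty → AcyclicAt R A (X ⊓ S.inf (missing c)) (n - 1 - #S))
    (hsup : ∀ T : Finset ι, n < #T → AcyclicAt R A (X ⊓ T.sup (missing c)) (#T - 2)) :
    ¬X ≤ univ.sup (missing c) := by
  intro hX
  have hXsup := le_sup_missing_of_le_card hX hsup
  have hXacyclic : AcyclicAt R A X (n - 1) := by
    obtain ⟨T, -, hT⟩ := exists_subset_card_eq (s := (univ : Finset ι)) hn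
    have hXT := hsup T (by omega)
    rw [inf_eq_left.2 (hXsup T (by omega)), hT] at hXT
    convert hXT using 1
    push_cast
    ring
  have hinf' (S : Finset ι) : AcyclicAt R A (X ⊓ S.inf (missing c)) (n - 1 - #S) := by
    obtain rfl | hS := S.eq_empty_or_nonempty
    · simpa using hXacyclic
    · exact hinf S hS
  obtain ⟨S, -, hS⟩ := exists_subset_card_eq (s := (univ : Finset ι)) hn.le
  have hbot := inf_inf_missing_le_sup_missing hinf' (fun T hT => hXsup T (by omega))
    (disjoint_empty_right S) (by simpa using hS)
  have hempty : ∅ ∈ X ⊓ S.inf (missing c) :=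
    LowerSet.mem_inf_iff.2 ⟨h0, mem_inf_missing.2 fun v hv => by simp at hv⟩
  simpa using hbot hempty

end Descent

section Sperner

variable {V : Type*} {K : Set (Finset V)}

/-- The faces of `K` together with the empty face. -/
def IsComplex.augment (hK : IsComplex K) : LowerSet (Finset V) where
  carrier := insert ∅ K
  lower' s t hts hs := by
    obtain rfl | ht := t.eq_empty_or_nonempty
    · exact Set.mem_insert ∅ K
    · obtain rfl | hs := hs
      · exact (ht.ne_empty (subset_empty.1 hts)).elim
      · exact Or.inr (hK.2 s hs t hts ht)

lemma IsComplex.exists_rainbow {ι : Type*} [Fintype ι] [Nonempty ι]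
    (hK : IsComplex K) {c : V → ι} (h : ¬hK.augment ≤ univ.sup (missing c)) :
    ∃ s ∈ K, ∀ i, ∃! v, v ∈ s ∧ c v = i := by
  classical
  obtain ⟨s, hs, hsc⟩ := Set.not_subset.1 h
  obtain ⟨x, hxs, hinj, hx⟩ :=
    exists_subset_injOn_image_eq_of_subset_image (not_not.1 (mt mem_sup_missing.2 hsc))
  have hsurj (i : ι) : ∃ v ∈ x, c v = i := mem_image.1 (hx ▸ mem_univ i)
  refine ⟨x, ?_, fun i => ?_⟩
  · obtain rfl | hxK := hK.augment.lower hxs hs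
    · exact absurd (hsurj (Classical.arbitrary ι)) (by simp)
    · exact hxK
  · obtain ⟨v, hv, hvi⟩ := hsurj i
    exact ⟨v, ⟨hv, hvi⟩, fun w hw => hinj hw.1 hv (hw.2.trans hvi.symm)⟩

variable {R A}

lemma IsComplex.acyclicAt_augment_inf [LinearOrder V] (hK : IsComplex K)
    {P : LowerSet (Finset V)} {d : ℤ} (h : RedHVanish R A V {s ∈ K | s ∈ P} d) :
    AcyclicAt R A (hK.augment ⊓ P) d := by
  refine acyclicAt_of_redHVanish ?_
  convert h using 1
  ext s
  constructor
  · rintro ⟨⟨rfl | hs, hsP⟩, hne⟩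
    · exact (not_nonempty_empty hne).elim
    · exact ⟨hs, hsP⟩
  · rintro ⟨hs, hsP⟩
    exact ⟨⟨Or.inr hs, hsP⟩, hK.1 s hs⟩

end Sperner

theorem mixed_homological_sperner_general {R A V ι : Type*} [CommRing R] [AddCommGroup A]
    [Module R A] [Nontrivial A] [LinearOrder V] [Fintype ι] [DecidableEq ι]
    {K : Set (Finset V)} (hK : IsComplex K) (c : V → ι)
    (hH : RedHVanish R A V K ((Fintype.card ι : ℤ) - 2))
    {k : ℤ} (hk1 : -1 ≤ k) (hk2 : k ≤ (Fintype.card ι : ℤ) - 2)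
    (h1 : ∀ S : Finset ι, 1 ≤ #S → (#S : ℤ) ≤ k + 1 →
      RedHVanish R A V {s ∈ K | ∀ v ∈ s, c v ∉ S} (k - #S))
    (h2 : ∀ S : Finset ι, k + 2 ≤ (#S : ℤ) → #S < Fintype.card ι →
      RedHVanish R A V {s ∈ K | ¬S ⊆ s.image c} ((#S : ℤ) - 2)) :
    ∃ s ∈ K, ∀ i, ∃! v, v ∈ s ∧ c v = i := by
  obtain ⟨n, hn⟩ := Int.eq_ofNat_of_zero_le (show 0 ≤ k + 1 by omega)
  obtain rfl : k = n - 1 := by omega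
  have : Nonempty ι := Fintype.card_pos_iff.1 (by omega)
  refine hK.exists_rainbow fun hle => not_le_univ_sup_missing (R := R) (A := A) (n := n)
    (Set.mem_insert ∅ K) (by omega) (fun S hS => ?_) (fun T hT => ?_) hle
  · by_cases hSn : #S ≤ n
    · refine hK.acyclicAt_augment_inf ?_
      simp only [mem_inf_missing]
      exact h1 S hS.card_pos (by omega)
    · exact acyclicAt_of_forall_card_ne fun s _ => by omega
  · obtain hTcard | hTcard := (card_le_univ T).lt_or_eq
    · refine hK.acyclicAt_augment_inf ?_
      simp only [mem_sup_missing]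
      exact h2 T (by omega) hTcard
    · have hacyclic := hK.acyclicAt_augment_inf (R := R) (A := A) (P := ⊤) (by simpa using hH)
      rw [(card_eq_iff_eq_univ T).1 hTcard, card_univ, inf_eq_left.2 hle]
      simpa only [inf_top_eq] using hacyclic

/-- Mixed homological Sperner theorem: conditions on the complexes `K_{complement S}`
for small `S` and on the complexes `K̃_S` for large `S` force a rainbow simplex. -/
theorem mixed_homological_sperner {V : Type*} [LinearOrder V] (F : Type*) [Field F]
    (m : ℕ) (K : Set (Finset V)) (hK : IsComplex K) (hvert : ∀ v : V, {v} ∈ K)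
    (c : V → Fin (m + 1)) (hc : Function.Surjective c)
    (hH : RedHVanish F F V K ((m : ℤ) - 1))
    (k : ℤ) (hk1 : -1 ≤ k) (hk2 : k ≤ (m : ℤ) - 1)
    (h1 : ∀ S : Finset (Fin (m + 1)), 1 ≤ S.card → (S.card : ℤ) ≤ k + 1 →
      RedHVanish F F V {s ∈ K | ∀ v ∈ s, c v ∉ S} (k - S.card))
    (h2 : ∀ S : Finset (Fin (m + 1)), k + 2 ≤ (S.card : ℤ) → S.card ≤ m →
      RedHVanish F F V {s ∈ K | ¬ S ⊆ s.image c} ((S.card : ℤ) - 2)) :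
    ∃ s ∈ K, ∀ i : Fin (m + 1), ∃! v, v ∈ s ∧ c v = i := by
  have hcard : (Fintype.card (Fin (m + 1)) : ℤ) - 2 = m - 1 := by rw [Fintype.card_fin]; omega
  exact mixed_homological_sperner_general hK c (hcard ▸ hH) hk1 (hcard ▸ hk2) h1
    fun S hS hSm => h2 S hS (Nat.le_of_lt_succ (by simpa using hSm))
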